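/- arXiv:1103.4674 — 2 statements merged into one kernel-verified Lean document; each statement's English description precedes it below -/
import Mathlib

section
/- For all real numbers x, y, z, the function x ↦ D(x, y, z) is differentiable at every x, and its derivative with respect to x equals H(y+z, x). That is, ∂D/∂x(x, y, z) = 1/(1 + exp((y+z+x)/2)) + 1/(1 + exp((y+z−x)/2)). -/
open Real

/-- Mirzakhani's kernel H(x, y). -/
noncomputable def H (x y : ℝ) : ℝ :=
  1 / (1 + Real.exp ((x + y) / 2)) + 1 / (1 + Real.exp ((x - y) / 2))

/-- The function D(x, y, z) from the generalised McShane identity. -/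
noncomputable def D (x y z : ℝ) : ℝ :=
  2 * Real.log ((Real.exp (x / 2) + Real.exp ((y + z) / 2)) /
      (Real.exp (-x / 2) + Real.exp ((y + z) / 2)))

/-!
With `s = y + z` and `L u = log (exp u + exp (s / 2))`, one has
`D x y z = 2 * (L (x / 2) - L (-x / 2))`. Since `L' u` is the sigmoid of `u - s / 2`, each of the
two terms contributes one summand of `H s x`.
-/

theorem exp_div_exp_add_exp (a b : ℝ) : exp a / (exp a + exp b) = sigmoid (a - b) := by
  rw [sigmoid_def, neg_sub, exp_sub]
  field_simp

theorem hasDerivAt_log_exp_add_exp {f : ℝ → ℝ} {f' x : ℝ} (hf : HasDerivAt f f' x) (b : ℝ) :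
    HasDerivAt (fun t ↦ log (exp (f t) + exp b)) (sigmoid (f x - b) * f') x := by
  rw [← exp_div_exp_add_exp, div_mul_eq_mul_div]
  exact (hf.exp.add_const _).log (by positivity)

theorem H_eq_sigmoid_add_sigmoid (x y : ℝ) :
    H x y = sigmoid (y / 2 - x / 2) + sigmoid (-y / 2 - x / 2) := by
  simp only [H, sigmoid_def, one_div]
  ring_nf

theorem D_eq_log_sub_log (x y z : ℝ) :
    D x y z = 2 * (log (exp (x / 2) + exp ((y + z) / 2)) -
      log (exp (-x / 2) + exp ((y + z) / 2))) := by
  rw [D, log_div (by positivity) (by positivity)]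

theorem deriv_D (x y z : ℝ) :
    HasDerivAt (fun x => D x y z) (H (y + z) x) x := by
  have h_pos : HasDerivAt (fun t ↦ log (exp (t / 2) + exp ((y + z) / 2)))
      (sigmoid (x / 2 - (y + z) / 2) * (1 / 2)) x :=
    hasDerivAt_log_exp_add_exp ((hasDerivAt_id x).div_const 2) _
  have h_neg : HasDerivAt (fun t ↦ log (exp (-t / 2) + exp ((y + z) / 2)))
      (sigmoid (-x / 2 - (y + z) / 2) * (-1 / 2)) x :=
    hasDerivAt_log_exp_add_exp ((hasDerivAt_neg x).div_const 2) _
  simp only [D_eq_log_sub_log]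
  refine ((h_pos.sub h_neg).const_mul 2).congr_deriv ?_
  rw [H_eq_sigmoid_add_sigmoid]
  ring
end

section
/- For all real numbers x, y, z, the function x ↦ R(x, y, z) is differentiable at every x, and its derivative with respect to x equals (1/2)·(H(z, x+y) + H(z, x−y)). -/
open Real

/-- The function R(x, y, z) from the generalised McShane identity. -/
noncomputable def R (x y z : ℝ) : ℝ :=
  x - Real.log ((Real.cosh (y / 2) + Real.cosh ((x + z) / 2)) /
      (Real.cosh (y / 2) + Real.cosh ((x - z) / 2)))

/- By the product formulas for hyperbolic functions, `log (cosh (x / 2) + cosh (y / 2))` has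
`x`-derivative `(tanh ((x + y) / 4) + tanh ((x - y) / 4)) / 4`. Since `1 / (1 + exp t)` is
`(1 - tanh (t / 2)) / 2`, this derivative is `(1 - H x y) / 2`. Now `R x y z` is `x` minus the
difference of two such logarithms, translated by `z` and `-z`, so its derivative is a combination
of `H (x + z) y` and `H (x - z) y`; the oddness of `tanh` and a regrouping of the four exponential
terms turn it into the stated one. -/

theorem sinh_div_cosh_add_cosh (x y : ℝ) :
    sinh x / (cosh x + cosh y) = (tanh ((x + y) / 2) + tanh ((x - y) / 2)) / 2 := by
  obtain ⟨a, b, rfl, rfl⟩ : ∃ a b, x = a + b ∧ y = a - b :=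
    ⟨(x + y) / 2, (x - y) / 2, by ring, by ring⟩
  have half_sum : (a + b + (a - b)) / 2 = a := by ring
  have half_diff : (a + b - (a - b)) / 2 = b := by ring
  have cosh_add_cosh : cosh (a + b) + cosh (a - b) = 2 * cosh a * cosh b := by
    rw [cosh_add, cosh_sub]
    ring
  have ha : cosh a ≠ 0 := (cosh_pos a).ne'
  have hb : cosh b ≠ 0 := (cosh_pos b).ne'
  rw [half_sum, half_diff, cosh_add_cosh, sinh_add, tanh_eq_sinh_div_cosh, tanh_eq_sinh_div_cosh]
  field_simp

theorem one_div_one_add_exp (x : ℝ) : 1 / (1 + exp x) = (1 - tanh (x / 2)) / 2 := by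
  have exp_half_sq : exp x = exp (x / 2) ^ 2 := by rw [← exp_nat_mul]; ring_nf
  rw [exp_half_sq, tanh_eq, exp_neg]
  field_simp
  ring

theorem H_eq_one_sub_tanh (x y : ℝ) :
    H x y = 1 - (tanh ((x + y) / 4) + tanh ((x - y) / 4)) / 2 := by
  rw [H, one_div_one_add_exp, one_div_one_add_exp]
  ring_nf

theorem H_neg_left (x y : ℝ) : H (-x) y = 2 - H x y := by
  have neg_add_div : (-x + y) / 4 = -((x - y) / 4) := by ring
  have neg_sub_div : (-x - y) / 4 = -((x + y) / 4) := by ring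
  rw [H_eq_one_sub_tanh, H_eq_one_sub_tanh, neg_add_div, neg_sub_div, tanh_neg, tanh_neg]
  ring

theorem H_add_right_add_H_sub_right (x y z : ℝ) :
    H x (y + z) + H x (y - z) = H (x + y) z + H (x - y) z := by
  simp only [H]
  ring_nf

theorem hasDerivAt_log_cosh_add_cosh (x y : ℝ) :
    HasDerivAt (fun t => log (cosh (t / 2) + cosh (y / 2))) ((1 - H x y) / 2) x := by
  have hpos : 0 < cosh (x / 2) + cosh (y / 2) := add_pos (cosh_pos _) (cosh_pos _)
  have hderiv := ((((hasDerivAt_id' x).div_const 2).cosh).add_const (cosh (y / 2))).log hpos.ne'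
  refine hderiv.congr_deriv ?_
  rw [mul_div_right_comm, sinh_div_cosh_add_cosh, H_eq_one_sub_tanh]
  ring_nf

theorem R_eq_sub_log_sub_log (x y z : ℝ) :
    R x y z = x - (log (cosh ((x + z) / 2) + cosh (y / 2)) -
      log (cosh ((x - z) / 2) + cosh (y / 2))) := by
  have hpos (t : ℝ) : 0 < cosh (y / 2) + cosh t := add_pos (cosh_pos _) (cosh_pos _)
  rw [R, log_div (hpos _).ne' (hpos _).ne', add_comm (cosh (y / 2)), add_comm (cosh (y / 2))]

theorem deriv_R (x y z : ℝ) :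
    HasDerivAt (fun x => R x y z) ((1 / 2) * (H z (x + y) + H z (x - y))) x := by
  simp only [R_eq_sub_log_sub_log]
  have hlog_add := (hasDerivAt_log_cosh_add_cosh (x + z) y).comp_add_const x z
  have hlog_sub := (hasDerivAt_log_cosh_add_cosh (x - z) y).comp_sub_const x z
  refine ((hasDerivAt_id' x).sub (hlog_add.sub hlog_sub)).congr_deriv ?_
  calc 1 - ((1 - H (x + z) y) / 2 - (1 - H (x - z) y) / 2)
      = 1 / 2 * (H (x + z) y + (2 - H (x - z) y)) := by ring
    _ = 1 / 2 * (H (z + x) y + H (z - x) y) := by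
      rw [← H_neg_left, neg_sub, add_comm x z]
    _ = 1 / 2 * (H z (x + y) + H z (x - y)) := by rw [H_add_right_add_H_sub_right]
end
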